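/- Suppose 2 ≤ k ≤ n are integers such that n is odd or n − k > 2, and f : V(C_n) → {1,...,k} is a k-color weak maximizer of the Wiener index W on C_n. Then W(f) = max{ W(f') : f' a k-color weak maximizer of W on C_n } if and only if f has a color class of the largest possible size n − (k − 1). -/

import Mathlib

open SimpleGraph Finset

/-- The cycle graph on vertex set `ZMod n`, with an edge between `i` and `i+1` (mod `n`). -/
def cycleGraphZMod (n : ℕ) : SimpleGraph (ZMod n) :=
  SimpleGraph.fromRel (fun u v => v = u + 1)

/-- The Wiener index of a set of vertices: the sum of all pairwise geodesic distances. -/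
noncomputable def wienerSet {V : Type*} [Fintype V] [DecidableEq V]
    (G : SimpleGraph V) (A : Finset V) : ℕ :=
  (∑ p ∈ A.offDiag, G.dist p.1 p.2) / 2

/-- `A` is a maximizer of `W` on `G`. -/
def IsWienerMaximizer {V : Type*} [Fintype V] [DecidableEq V]
    (G : SimpleGraph V) (A : Finset V) : Prop :=
  ∀ B : Finset V, B.card = A.card → wienerSet G B ≤ wienerSet G A

/-- `A ⊆ V(C_n)` is almost good. -/
def AlmostGood (n : ℕ) (A : Finset (ZMod n)) : Prop :=
  A.card = 1 ∨ A.card = n - 1 ∨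
    ∃ c₁ c₂ : ((cycleGraphZMod n).induce (↑A : Set (ZMod n))).ConnectedComponent,
      c₁ ≠ c₂ ∧ (∀ c, c = c₁ ∨ c = c₂) ∧
      (c₁.supp.ncard : ℤ) - (c₂.supp.ncard : ℤ) ≤ 1 ∧
      (c₂.supp.ncard : ℤ) - (c₁.supp.ncard : ℤ) ≤ 1

/-- `A ⊆ V(C_n)` is good: both `A` and its complement are almost good. -/
def GoodSet (n : ℕ) [NeZero n] (A : Finset (ZMod n)) : Prop :=
  AlmostGood n A ∧ AlmostGood n (Finset.univ \ A)

/-- The color class of color `i` for the coloring `f`. -/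
def colorClass {V : Type*} [Fintype V] {k : ℕ} (f : V → Fin k) (i : Fin k) : Finset V :=
  Finset.univ.filter (fun v => f v = i)

/-- The Wiener index of a coloring: the sum of the Wiener indices of its color classes. -/
noncomputable def wienerColoring {V : Type*} [Fintype V] [DecidableEq V] {k : ℕ}
    (G : SimpleGraph V) (f : V → Fin k) : ℕ :=
  ∑ i : Fin k, wienerSet G (colorClass f i)

/-- The type of a coloring, as the multiset of cardinalities of its color classes
(equality of multisets is equality of the nondecreasing rearrangements). -/
def colorType {V : Type*} [Fintype V] {k : ℕ} (f : V → Fin k) : Multiset ℕ :=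
  (Finset.univ : Finset (Fin k)).val.map (fun i => (colorClass f i).card)

/-- `f` is a `k`-color weak maximizer of `W` on `G`. -/
def IsWeakMaximizer {V : Type*} [Fintype V] [DecidableEq V] {k : ℕ}
    (G : SimpleGraph V) (f : V → Fin k) : Prop :=
  Function.Surjective f ∧ ∀ g : V → Fin k, Function.Surjective g →
    colorType g = colorType f → wienerColoring G g ≤ wienerColoring G f

/-- The coloring obtained from `f` by swapping the colors of `u` and `v`. -/
def swapColors {V α : Type*} [DecidableEq V] (f : V → α) (u v : V) : V → α :=
  f ∘ Equiv.swap u v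

/-- `f` is a `k`-color local weak maximizer of `W` on `G`. -/
def IsLocalWeakMaximizer {V : Type*} [Fintype V] [DecidableEq V] {k : ℕ}
    (G : SimpleGraph V) (f : V → Fin k) : Prop :=
  Function.Surjective f ∧ ∀ u v : V, G.Adj u v →
    wienerColoring G (swapColors f u v) ≤ wienerColoring G f

/-- The number of vertices to the left of `u` in the path that get the same color as `u`. -/
def leftCount {n k : ℕ} (f : Fin n → Fin k) (u : Fin n) : ℕ :=
  (Finset.univ.filter (fun w => w < u ∧ f w = f u)).card

/-- The number of vertices to the right of `u` in the path that get the same color as `u`. -/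
def rightCount {n k : ℕ} (f : Fin n → Fin k) (u : Fin n) : ℕ :=
  (Finset.univ.filter (fun w => u < w ∧ f w = f u)).card

/-- The sum of the `j` largest entries of a multiset of naturals. -/
def sumLargest (s : Multiset ℕ) (j : ℕ) : ℕ :=
  (((s.sort (· ≤ ·)).reverse).take j).sum

/-- `x ≺ y` : `x` is majorized by `y`. -/
def MajorizedBy (x y : Multiset ℕ) : Prop :=
  x.card = y.card ∧ x.sum = y.sum ∧ ∀ j, sumLargest x j ≤ sumLargest y j

/-- The reverse Robin Hood transfer `R_{j,j'}` applied to the (sorted) list `t`,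
with `j ≤ j'` zero-indexed: subtract `1` from the `j`-th entry and add `1` to the `j'`-th
entry; the result is recorded as a multiset (i.e. up to rearrangement). -/
def rhTransfer (t : List ℕ) (j j' : ℕ) : Multiset ℕ :=
  ↑((t.set j (t.getD j 0 - 1)).set j' ((t.set j (t.getD j 0 - 1)).getD j' 0 + 1))

/-- `t(n,k)` : the unique nondecreasing `k`-tuple of positive integers summing to `n`
whose entries pairwise differ by at most one, as a multiset. -/
def equitableType (n k : ℕ) : Multiset ℕ :=
  Multiset.replicate (k - n % k) (n / k) + Multiset.replicate (n % k) (n / k + 1)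

/-- One step of the operation `R`: `s ∈ R({t})`, i.e. `s = t` or `s` is obtained from `t` by
a reverse Robin Hood transfer between two entries that are equal and even. -/
def REstep (t s : Multiset ℕ) : Prop :=
  s = t ∨ ∃ m : ℕ, Even m ∧ 2 ≤ t.count m ∧
    s = (t - Multiset.replicate 2 m) + {m - 1, m + 1}

/-- `s ∈ R^∞({t(n,k)})`. -/
def InRInfty (n k : ℕ) (s : Multiset ℕ) : Prop :=
  Relation.ReflTransGen REstep (equitableType n k) s

lemma cycleGraphZMod_dist_add_natCast (n : ℕ) (u : ZMod n) (m : ℕ) :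
    (cycleGraphZMod n).Reachable u (u + m) ∧ (cycleGraphZMod n).dist u (u + m) ≤ m := by
  suffices h : ∃ p : (cycleGraphZMod n).Walk u (u + m), p.length ≤ m by
    obtain ⟨p, hp⟩ := h
    exact ⟨p.reachable, (SimpleGraph.dist_le p).trans hp⟩
  induction m with
  | zero => exact ⟨SimpleGraph.Walk.nil.copy rfl (by simp), by simp⟩
  | succ m ih =>
    obtain ⟨p, hp⟩ := ih
    have hs : u + ((m + 1 : ℕ) : ZMod n) = u + m + 1 := by push_cast; ring
    by_cases h : u + m = u + m + 1
    · exact ⟨p.copy rfl (by rw [hs, ← h]), by simp; omega⟩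
    · have hadj : (cycleGraphZMod n).Adj (u + m) (u + m + 1) := by
        simp only [cycleGraphZMod, SimpleGraph.fromRel_adj]
        exact ⟨h, Or.inl trivial⟩
      exact ⟨(p.concat hadj).copy rfl hs.symm, by simp; omega⟩

lemma cycleGraphZMod_connected (n : ℕ) [NeZero n] : (cycleGraphZMod n).Connected := by
  refine ⟨fun u v => ?_⟩
  have h := (cycleGraphZMod_dist_add_natCast n u (v - u).val).1
  simpa using h

lemma natAbs_valMinAbs_sub_le_dist (n : ℕ) [NeZero n] (u v : ZMod n) :
    (v - u).valMinAbs.natAbs ≤ (cycleGraphZMod n).dist u v := by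
  obtain ⟨p, hp⟩ := (cycleGraphZMod_connected n).exists_walk_length_eq_dist u v
  rw [← hp]
  clear hp
  induction p with
  | nil => simp
  | @cons a b c hadj p ih =>
    have hone : ((b - a).valMinAbs).natAbs ≤ 1 := by
      have h1 : ((1 : ZMod n).valMinAbs).natAbs ≤ 1 := by
        rw [ZMod.valMinAbs_natAbs_eq_min]
        by_cases hn : n = 1
        · subst hn; simp
        · exact (min_le_left _ _).trans (ZMod.val_one'' hn).le
      simp only [cycleGraphZMod, SimpleGraph.fromRel_adj] at hadj
      rcases hadj.2 with h | h
      · rw [h]; simpa using h1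
      · rw [h, ← ZMod.natAbs_valMinAbs_neg]; simpa using h1
    have h := ZMod.natAbs_valMinAbs_add_le (c - b) (b - a)
    rw [sub_add_sub_cancel] at h
    rw [SimpleGraph.Walk.length_cons]
    have := h.trans (Int.natAbs_add_le _ _)
    omega

lemma cycleGraphZMod_dist (n : ℕ) [NeZero n] (u v : ZMod n) :
    (cycleGraphZMod n).dist u v = (v - u).valMinAbs.natAbs := by
  refine le_antisymm ?_ (natAbs_valMinAbs_sub_le_dist n u v)
  have hc : (((v - u).valMinAbs : ℤ) : ZMod n) = v - u := ZMod.coe_valMinAbs _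
  rcases Int.natAbs_eq (v - u).valMinAbs with h | h
  · have := (cycleGraphZMod_dist_add_natCast n u (v - u).valMinAbs.natAbs).2
    rw [h, Int.cast_natCast] at hc
    rwa [hc, add_sub_cancel] at this
  · have := (cycleGraphZMod_dist_add_natCast n v (v - u).valMinAbs.natAbs).2
    rw [h, Int.cast_neg, Int.cast_natCast, neg_eq_iff_eq_neg, neg_sub] at hc
    rwa [hc, add_sub_cancel, SimpleGraph.dist_comm] at this

/-- The distance in the cycle in terms of representatives. -/
lemma cycleGraphZMod_dist_eq_min (n : ℕ) [NeZero n] (u v : ZMod n) :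
    ((cycleGraphZMod n).dist u v : ℤ) =
      min |(u.val : ℤ) - v.val| (n - |(u.val : ℤ) - v.val|) := by
  wlog h : u.val ≤ v.val generalizing u v
  · rw [SimpleGraph.dist_comm, abs_sub_comm]
    exact this v u (by omega)
  have := v.val_lt
  rw [cycleGraphZMod_dist, ZMod.valMinAbs_natAbs_eq_min, ZMod.val_sub h,
    abs_of_nonpos (by omega)]
  omega

/-- Of four distinct points of an odd cycle, given by representatives, two disjoint pairs are
at smaller total distance than the four distances between the pairs. -/
lemma cyclicDist_add_lt (n m a b c d : ℤ) (hn : n = 2 * m + 1) (ha : 0 ≤ a) (han : a < n)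
    (hb : 0 ≤ b) (hbn : b < n) (hc : 0 ≤ c) (hcn : c < n) (hd : 0 ≤ d) (hdn : d < n)
    (h1 : a ≠ b) (h2 : a ≠ c) (h3 : a ≠ d) (h4 : b ≠ c) (h5 : b ≠ d) (h6 : c ≠ d) :
    min |a - b| (n - |a - b|) + min |c - d| (n - |c - d|) <
      min |a - c| (n - |a - c|) + min |a - d| (n - |a - d|) +
        min |b - c| (n - |b - c|) + min |b - d| (n - |b - d|) := by
  wlog hab : a < b generalizing a b
  · have := this b a hb hbn ha han (by omega) (by omega) (by omega) (by omega) (by omega) (by omega)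
    rw [abs_sub_comm a b]
    omega
  wlog hcd : c < d generalizing c d
  · have := this d c hd hdn hc hcn (by omega) (by omega) (by omega) (by omega) (by omega) (by omega)
    rw [abs_sub_comm c d]
    omega
  wlog hac : a < c generalizing a b c d
  · have := this c d hc hcn hd hdn h6 hcd a b ha han hb hbn h1 (by omega) (by omega)
      (by omega) (by omega) hab (by omega)
    rw [abs_sub_comm a c, abs_sub_comm a d, abs_sub_comm b c, abs_sub_comm b d]
    omega
  rw [abs_of_neg (by omega : a - b < 0), abs_of_neg (by omega : c - d < 0),
    abs_of_neg (by omega : a - c < 0), abs_of_neg (by omega : a - d < 0)]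
  rcases lt_or_gt_of_ne h4 with h | h
  · rw [abs_of_neg (by omega : b - c < 0), abs_of_neg (by omega : b - d < 0)]
    omega
  · rw [abs_of_pos (by omega : 0 < b - c)]
    rcases lt_or_gt_of_ne h5 with h | h
    · rw [abs_of_neg (by omega : b - d < 0)]
      omega
    · rw [abs_of_pos (by omega : 0 < b - d)]
      omega

section Merge

variable {V : Type*} [Fintype V] [DecidableEq V] (G : SimpleGraph V)

/-- The sum of the distances between the elements of `A` and the elements of `B`. -/
noncomputable def sumDist (A B : Finset V) : ℕ := ∑ x ∈ A, ∑ y ∈ B, G.dist x y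

omit [Fintype V] [DecidableEq V] in
lemma sumDist_comm (A B : Finset V) : sumDist G A B = sumDist G B A := by
  rw [sumDist, sumDist, Finset.sum_comm]
  simp_rw [SimpleGraph.dist_comm]

lemma two_mul_wienerSet (A : Finset V) : 2 * wienerSet G A = sumDist G A A := by
  have hdiag : ∑ p ∈ A.offDiag, G.dist p.1 p.2 = sumDist G A A := by
    rw [sumDist, ← Finset.sum_product', ← Finset.diag_union_offDiag,
      Finset.sum_union (Finset.disjoint_diag_offDiag A), Finset.sum_diag]
    simp
  have heven : 2 ∣ ∑ p ∈ A.offDiag, G.dist p.1 p.2 := by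
    rw [← ZMod.natCast_eq_zero_iff, Nat.cast_sum]
    refine Finset.sum_involution (fun p _ => p.swap) ?_ ?_ ?_ ?_
    · intro p _
      rw [Prod.fst_swap, Prod.snd_swap, SimpleGraph.dist_comm]
      exact CharTwo.add_self_eq_zero _
    · intro p hp _ h
      rw [Finset.mem_offDiag] at hp
      exact hp.2.2 (congrArg Prod.snd h)
    · intro p hp
      simp only [Finset.mem_offDiag, Prod.fst_swap, Prod.snd_swap] at hp ⊢
      exact ⟨hp.2.1, hp.1, hp.2.2.symm⟩
    · intro p _
      exact p.swap_swap
  rw [wienerSet, Nat.mul_div_cancel' heven, hdiag]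

omit [Fintype V] in
lemma sumDist_union_self {A B : Finset V} (h : Disjoint A B) :
    sumDist G (A ∪ B) (A ∪ B) = sumDist G A A + sumDist G B B + 2 * sumDist G A B := by
  have h1 : sumDist G (A ∪ B) (A ∪ B) =
      sumDist G A A + sumDist G A B + (sumDist G B A + sumDist G B B) := by
    simp only [sumDist]
    rw [Finset.sum_union h]
    simp_rw [Finset.sum_union h, Finset.sum_add_distrib]
  rw [h1, sumDist_comm G B A]
  ring

omit [Fintype V] in
lemma sumDist_erase_self {T : Finset V} {x : V} (hx : x ∈ T) :
    sumDist G (T.erase x) (T.erase x) + 2 * ∑ y ∈ T, G.dist x y = sumDist G T T := by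
  have h := sumDist_union_self G (A := {x}) (B := T.erase x) (by simp)
  rw [← Finset.insert_eq, Finset.insert_erase hx] at h
  rw [h, ← Finset.add_sum_erase T _ hx]
  simp [sumDist]

variable {G}

omit [Fintype V] in
/-- Summing the triangle inequality over all detours from `B` to `B` through `A`. -/
lemma card_mul_sumDist_self_le (hG : G.Connected) (A B : Finset V) :
    A.card * sumDist G B B + 2 * sumDist G A B ≤ 2 * B.card * sumDist G A B := by
  have hx : ∀ x, sumDist G B B + 2 * ∑ y ∈ B, G.dist x y ≤ 2 * B.card * ∑ y ∈ B, G.dist x y := by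
    intro x
    have hy : ∀ y ∈ B, ∑ z ∈ B, G.dist y z + 2 * G.dist x y ≤
        ∑ z ∈ B, (G.dist x y + G.dist x z) := by
      intro y hy
      rw [← Finset.add_sum_erase B _ hy, ← Finset.add_sum_erase B _ hy, SimpleGraph.dist_self]
      have : ∑ z ∈ B.erase y, G.dist y z ≤ ∑ z ∈ B.erase y, (G.dist x y + G.dist x z) := by
        refine Finset.sum_le_sum fun z _ => ?_
        rw [G.dist_comm (u := x) (v := y)]
        exact hG.dist_triangle
      omega
    have h := Finset.sum_le_sum hy
    simp only [Finset.sum_add_distrib, ← Finset.mul_sum, Finset.sum_const, smul_eq_mul] at h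
    rw [sumDist]
    linarith
  have h := Finset.sum_le_sum fun x (_ : x ∈ A) => hx x
  simp only [Finset.sum_add_distrib, ← Finset.mul_sum, Finset.sum_const, smul_eq_mul] at h
  exact h

omit [Fintype V] [DecidableEq V] in
lemma sumDist_pos (hG : G.Connected) {A B : Finset V} (h : Disjoint A B)
    (hA : A.Nonempty) (hB : B.Nonempty) : 0 < sumDist G A B := by
  refine Finset.sum_pos (fun x hx => Finset.sum_pos (fun y hy => ?_) hB) hA
  exact hG.pos_dist_of_ne (Finset.disjoint_left.mp h hx <| · ▸ hy)

lemma add_two_mul_le_of_mul_le {a b S T X : ℕ} (ha : 2 ≤ a) (hb : 2 ≤ b)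
    (hT : a * T + 2 * X ≤ 2 * b * X) (hS : b * S + 2 * X ≤ 2 * a * X) :
    S + T + 2 * X ≤ (a + b) * X ∧
      (0 < X → 3 ≤ a ∨ 3 ≤ b → S + T + 2 * X < (a + b) * X) := by
  obtain ⟨s, rfl⟩ := Nat.exists_eq_add_of_le ha
  obtain ⟨t, rfl⟩ := Nat.exists_eq_add_of_le hb
  have key : (2 + s) * (2 + t) * (S + T + 2 * X) +
      (6 * s * t + s ^ 2 * t + s * t ^ 2 + 2 * s + 2 * t) * X ≤
        (2 + s) * (2 + t) * ((2 + s + (2 + t)) * X) := by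
    have h1 := Nat.mul_le_mul_left (2 + t) hT
    have h2 := Nat.mul_le_mul_left (2 + s) hS
    linarith
  have hpos : 0 < (2 + s) * (2 + t) := by positivity
  refine ⟨le_of_mul_le_mul_left (le_of_add_le_left key) hpos, fun hX hst => ?_⟩
  refine lt_of_mul_lt_mul_left (lt_of_lt_of_le (Nat.lt_add_of_pos_right ?_) key) hpos.le
  refine Nat.mul_pos ?_ hX
  have : 0 < 2 * s + 2 * t := by omega
  omega

omit [Fintype V] in
lemma exists_sum_dist_le (hG : G.Connected) {A B : Finset V} (h : Disjoint A B)
    (hA : 2 ≤ A.card) (hB : 2 ≤ B.card) :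
    ∃ x ∈ A ∪ B, ∑ y ∈ A ∪ B, G.dist x y ≤ sumDist G A B ∧
      (3 ≤ A.card ∨ 3 ≤ B.card ∨ sumDist G A A + sumDist G B B < 2 * sumDist G A B →
        ∑ y ∈ A ∪ B, G.dist x y < sumDist G A B) := by
  have hne : (A ∪ B).Nonempty :=
    (Finset.card_pos.mp (by omega : 0 < A.card)).mono Finset.subset_union_left
  have hX := sumDist_pos hG h (Finset.card_pos.mp (by omega)) (Finset.card_pos.mp (by omega))
  have hnum := add_two_mul_le_of_mul_le hA hB (card_mul_sumDist_self_le hG A B)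
    (sumDist_comm G A B ▸ card_mul_sumDist_self_le hG B A)
  have hsum := sumDist_union_self G h
  have hconst : ∑ _x ∈ A ∪ B, sumDist G A B = (A.card + B.card) * sumDist G A B := by
    rw [Finset.sum_const, Finset.card_union_of_disjoint h, smul_eq_mul]
  by_cases hs : 3 ≤ A.card ∨ 3 ≤ B.card ∨ sumDist G A A + sumDist G B B < 2 * sumDist G A B
  · have hlt : sumDist G (A ∪ B) (A ∪ B) < ∑ _x ∈ A ∪ B, sumDist G A B := by
      rw [hconst, hsum]
      by_cases hc : 3 ≤ A.card ∨ 3 ≤ B.card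
      · exact hnum.2 hX hc
      · have := Nat.mul_le_mul_right (sumDist G A B) (by omega : 4 ≤ A.card + B.card)
        omega
    obtain ⟨x, hx, hlt⟩ := Finset.exists_lt_of_sum_lt hlt
    exact ⟨x, hx, hlt.le, fun _ => hlt⟩
  · obtain ⟨x, hx, hle⟩ := Finset.exists_le_of_sum_le hne
      (show sumDist G (A ∪ B) (A ∪ B) ≤ ∑ _x ∈ A ∪ B, sumDist G A B by
        rw [hconst, hsum]; exact hnum.1)
    exact ⟨x, hx, hle, fun h => absurd h hs⟩

variable {k : ℕ}

omit [DecidableEq V] in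
lemma mem_colorClass {f : V → Fin k} {i : Fin k} {v : V} : v ∈ colorClass f i ↔ f v = i := by
  simp [colorClass]

omit [DecidableEq V] in
lemma disjoint_colorClass (f : V → Fin k) {i j : Fin k} (hij : i ≠ j) :
    Disjoint (colorClass f i) (colorClass f j) := by
  rw [Finset.disjoint_left]
  intro v hi hj
  rw [mem_colorClass] at hi hj
  exact hij (hi.symm.trans hj)

omit [DecidableEq V] in
lemma surjective_iff_card_colorClass_pos {f : V → Fin k} :
    Function.Surjective f ↔ ∀ i, 0 < (colorClass f i).card := by
  simp [Function.Surjective, Finset.card_pos, Finset.Nonempty, mem_colorClass]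

omit [DecidableEq V] in
lemma sum_card_colorClass (f : V → Fin k) : ∑ i, (colorClass f i).card = Fintype.card V :=
  (Finset.card_eq_sum_card_fiberwise fun _ _ => Finset.mem_coe.mpr (Finset.mem_univ _)).symm

/-- Merging two color classes of size at least two while keeping a single vertex of the
second color does not decrease the Wiener index, for a suitable choice of that vertex. -/
lemma exists_merge (hG : G.Connected) {f : V → Fin k} (hf : Function.Surjective f)
    {i j : Fin k} (hij : i ≠ j) (hi : 2 ≤ (colorClass f i).card)
    (hj : 2 ≤ (colorClass f j).card) :
    ∃ g : V → Fin k, Function.Surjective g ∧ wienerColoring G f ≤ wienerColoring G g ∧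
      3 ≤ (colorClass g i).card ∧
      (∀ l, l ≠ i → l ≠ j → colorClass g l = colorClass f l) ∧
      (3 ≤ (colorClass f i).card ∨ 3 ≤ (colorClass f j).card ∨
        sumDist G (colorClass f i) (colorClass f i) + sumDist G (colorClass f j) (colorClass f j) <
          2 * sumDist G (colorClass f i) (colorClass f j) →
        wienerColoring G f < wienerColoring G g) := by
  have hd := disjoint_colorClass f hij
  obtain ⟨x, hx, hle, hlt⟩ := exists_sum_dist_le hG hd hi hj
  set T := colorClass f i ∪ colorClass f j with hT
  have hxT : f x = i ∨ f x = j := by simpa [hT, mem_colorClass] using hx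
  let g : V → Fin k := fun v => if v = x then j else if f v = j then i else f v
  have hgj : colorClass g j = {x} := by
    ext v
    rw [mem_colorClass, Finset.mem_singleton]
    grind
  have hgi : colorClass g i = T.erase x := by
    ext v
    rw [mem_colorClass, Finset.mem_erase, hT, Finset.mem_union, mem_colorClass, mem_colorClass]
    grind
  have hgl : ∀ l, l ≠ i → l ≠ j → colorClass g l = colorClass f l := by
    intro l hli hlj
    ext v
    rw [mem_colorClass, mem_colorClass]
    grind
  have hcard : 3 ≤ (colorClass g i).card := by
    rw [hgi, Finset.card_erase_of_mem hx, hT, Finset.card_union_of_disjoint hd]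
    omega
  have hsplit : ∀ F : Fin k → ℕ,
      ∑ l, F l = F i + (F j + ∑ l ∈ (Finset.univ.erase i).erase j, F l) := by
    intro F
    rw [Finset.add_sum_erase _ _ (Finset.mem_erase.mpr ⟨hij.symm, Finset.mem_univ j⟩),
      Finset.add_sum_erase _ _ (Finset.mem_univ i)]
  have hrest : ∑ l ∈ (Finset.univ.erase i).erase j, wienerSet G (colorClass g l) =
      ∑ l ∈ (Finset.univ.erase i).erase j, wienerSet G (colorClass f l) := by
    refine Finset.sum_congr rfl fun l hl => ?_
    simp only [Finset.mem_erase] at hl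
    rw [hgl l hl.2.1 hl.1]
  have hW : wienerColoring G g + ∑ y ∈ T, G.dist x y =
      wienerColoring G f + sumDist G (colorClass f i) (colorClass f j) := by
    rw [wienerColoring, wienerColoring, hsplit, hsplit, hrest]
    have h1 := two_mul_wienerSet G (colorClass f i)
    have h2 := two_mul_wienerSet G (colorClass f j)
    have h3 := two_mul_wienerSet G (colorClass g i)
    have h4 := two_mul_wienerSet G (colorClass g j)
    have h5 : sumDist G T T = _ := sumDist_union_self G hd
    have h6 := sumDist_erase_self G hx
    have h7 : sumDist G {x} {x} = 0 := by simp [sumDist]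
    rw [hgi] at h3
    rw [hgj, h7] at h4
    rw [hgi, hgj]
    omega
  refine ⟨g, ?_, by omega, hcard, hgl, fun h => by have := hlt h; omega⟩
  rw [surjective_iff_card_colorClass_pos] at hf ⊢
  intro l
  by_cases hli : l = i
  · subst hli; omega
  by_cases hlj : l = j
  · subst hlj; simp [hgj]
  rw [hgl l hli hlj]
  exact hf l

omit [DecidableEq V] in
lemma exists_card_colorClass_eq {f : V → Fin k} (hf : Function.Surjective f) (hk : 1 ≤ k)
    (h : ∀ i j, i ≠ j → 2 ≤ (colorClass f i).card → ¬ 2 ≤ (colorClass f j).card) :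
    ∃ i, (colorClass f i).card = Fintype.card V - (k - 1) := by
  rw [surjective_iff_card_colorClass_pos] at hf
  obtain ⟨i, hi⟩ : ∃ i, ∀ l, l ≠ i → (colorClass f l).card = 1 := by
    by_cases hex : ∃ i, 2 ≤ (colorClass f i).card
    · obtain ⟨i, hi⟩ := hex
      exact ⟨i, fun l hl => by have := h i l hl.symm hi; have := hf l; omega⟩
    · exact ⟨⟨0, hk⟩, fun l _ => by have := not_exists.mp hex l; have := hf l; omega⟩
  refine ⟨i, ?_⟩
  rw [← sum_card_colorClass f, ← Finset.add_sum_erase _ _ (Finset.mem_univ i),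
    Finset.sum_congr rfl fun l hl => hi l (Finset.ne_of_mem_erase hl)]
  simp

omit [DecidableEq V] in
lemma colorType_eq_of_card_colorClass {f : V → Fin k} (hf : Function.Surjective f) {i : Fin k}
    (hi : (colorClass f i).card = Fintype.card V - (k - 1)) :
    colorType f = (Fintype.card V - (k - 1)) ::ₘ Multiset.replicate (k - 1) 1 := by
  rw [surjective_iff_card_colorClass_pos] at hf
  have hsum := sum_card_colorClass f
  rw [← Finset.add_sum_erase _ _ (Finset.mem_univ i)] at hsum
  have hone : ∀ l ∈ Finset.univ.erase i, 1 = (colorClass f l).card := by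
    refine (Finset.sum_eq_sum_iff_of_le fun l _ => hf l).mp ?_
    have := hf i
    simp
    omega
  rw [colorType, ← Finset.insert_erase (Finset.mem_univ i),
    Finset.insert_val_of_notMem (Finset.notMem_erase _ _), Multiset.map_cons, hi]
  congr 1
  rw [Multiset.map_congr rfl fun l hl => (hone l hl).symm, Multiset.map_const']
  simp

end Merge

/-- In an odd cycle the two distances within disjoint pairs sum to less than the four
distances between them. -/
lemma sumDist_self_add_lt_of_odd {n : ℕ} [NeZero n] (hn : Odd n) {A B : Finset (ZMod n)}
    (h : Disjoint A B) (hA : A.card = 2) (hB : B.card = 2) :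
    sumDist (cycleGraphZMod n) A A + sumDist (cycleGraphZMod n) B B <
      2 * sumDist (cycleGraphZMod n) A B := by
  obtain ⟨p, q, hpq, rfl⟩ := Finset.card_eq_two.mp hA
  obtain ⟨r, s, hrs, rfl⟩ := Finset.card_eq_two.mp hB
  simp only [Finset.disjoint_insert_left, Finset.mem_insert, Finset.mem_singleton, not_or,
    Finset.disjoint_singleton_left] at h
  obtain ⟨m, hm⟩ := hn
  have hval : ∀ {u v : ZMod n}, u ≠ v → (u.val : ℤ) ≠ v.val := fun huv h =>
    huv (ZMod.val_injective n (by exact_mod_cast h))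
  have hlt : ∀ u : ZMod n, (u.val : ℤ) < n := fun u => by exact_mod_cast u.val_lt
  have key := cyclicDist_add_lt n m p.val q.val r.val s.val (by exact_mod_cast hm)
    (by positivity) (hlt p) (by positivity) (hlt q) (by positivity) (hlt r) (by positivity)
    (hlt s)
    (hval hpq) (hval h.1.1) (hval h.1.2) (hval h.2.1) (hval h.2.2) (hval hrs)
  simp only [← cycleGraphZMod_dist_eq_min] at key
  simp only [sumDist, Finset.sum_pair hpq, Finset.sum_pair hrs, SimpleGraph.dist_self,
    (cycleGraphZMod n).dist_comm (u := q) (v := p), (cycleGraphZMod n).dist_comm (u := s) (v := r)]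
  omega

/-- A coloring without a class of the largest possible size can be improved. -/
lemma exists_wienerColoring_lt {n k : ℕ} [NeZero n] (hk : 1 ≤ k) (hcase : Odd n ∨ 2 < n - k)
    {f : ZMod n → Fin k} (hf : Function.Surjective f)
    (hcard : ¬ ∃ i, (colorClass f i).card = n - (k - 1)) :
    ∃ g : ZMod n → Fin k, Function.Surjective g ∧
      wienerColoring (cycleGraphZMod n) f < wienerColoring (cycleGraphZMod n) g := by
  have hG := cycleGraphZMod_connected n
  obtain ⟨i, j, hij, hi, hj⟩ : ∃ i j, i ≠ j ∧ 2 ≤ (colorClass f i).card ∧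
      2 ≤ (colorClass f j).card := by
    by_contra! h
    refine hcard ?_
    simpa [ZMod.card] using exists_card_colorClass_eq hf hk fun i j hij hi => (h i j hij hi).not_ge
  obtain ⟨g, hg, hle, hgi, hgl, hlt⟩ := exists_merge hG hf hij hi hj
  by_cases hthree : 3 ≤ (colorClass f i).card ∨ 3 ≤ (colorClass f j).card
  · exact ⟨g, hg, hlt (by tauto)⟩
  rcases hcase with hn | hn
  · exact ⟨g, hg, hlt (.inr (.inr (sumDist_self_add_lt_of_odd hn (disjoint_colorClass f hij)
      (by omega) (by omega))))⟩
  · obtain ⟨l, hli, hlj, hl⟩ : ∃ l, l ≠ i ∧ l ≠ j ∧ 2 ≤ (colorClass f l).card := by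
      by_contra! h
      have hsum := sum_card_colorClass f
      have hj' : j ∈ Finset.univ.erase i := Finset.mem_erase.mpr ⟨hij.symm, Finset.mem_univ j⟩
      have hrest : ∑ l ∈ (Finset.univ.erase i).erase j, (colorClass f l).card ≤ k - 2 := by
        refine (Finset.sum_le_card_nsmul _ _ 1 fun l hl => ?_).trans ?_
        · simp only [Finset.mem_erase] at hl
          exact Nat.le_of_lt_succ (h l hl.2.1 hl.1)
        · rw [Finset.card_erase_of_mem hj', Finset.card_erase_of_mem (Finset.mem_univ i)]
          simp
          omega
      rw [← Finset.add_sum_erase _ _ (Finset.mem_univ i), ← Finset.add_sum_erase _ _ hj',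
        ZMod.card] at hsum
      have := i.isLt
      have := j.isLt
      have := Fin.val_ne_of_ne hij
      omega
    rw [← hgl l hli hlj] at hl
    obtain ⟨g', hg', -, -, -, hlt'⟩ := exists_merge hG hg hli.symm (by omega) hl
    exact ⟨g', hg', hle.trans_lt (hlt' (.inl hgi))⟩

/-- For `2 ≤ k ≤ n` with `n` odd or `n − k > 2`, and `f` a `k`-color weak maximizer of `W`
on `C_n`: `W(f)` is maximal among `k`-color weak maximizers iff `f` has a color class of
the largest possible size `n − (k − 1)`. -/
theorem cycle_max_iff (n k : ℕ) [NeZero n] (hk : 2 ≤ k) (hkn : k ≤ n)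
    (hcase : Odd n ∨ 2 < n - k)
    (f : ZMod n → Fin k) (hf : IsWeakMaximizer (cycleGraphZMod n) f) :
    (∀ g : ZMod n → Fin k, IsWeakMaximizer (cycleGraphZMod n) g →
        wienerColoring (cycleGraphZMod n) g ≤ wienerColoring (cycleGraphZMod n) f)
      ↔ ∃ i : Fin k, (colorClass f i).card = n - (k - 1) := by
  have : Nonempty {g : ZMod n → Fin k // Function.Surjective g} := ⟨⟨f, hf.1⟩⟩
  obtain ⟨⟨m, hm⟩, hmax⟩ := Finite.exists_max
    (fun g : {g : ZMod n → Fin k // Function.Surjective g} =>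
      wienerColoring (cycleGraphZMod n) g.1)
  replace hmax : ∀ g : ZMod n → Fin k, Function.Surjective g →
      wienerColoring (cycleGraphZMod n) g ≤ wienerColoring (cycleGraphZMod n) m :=
    fun g hg => hmax ⟨g, hg⟩
  have hcard : ∀ g : ZMod n → Fin k, Function.Surjective g →
      wienerColoring (cycleGraphZMod n) m ≤ wienerColoring (cycleGraphZMod n) g →
      ∃ i, (colorClass g i).card = n - (k - 1) := by
    intro g hg hmg
    by_contra h
    obtain ⟨g', hg', hlt⟩ := exists_wienerColoring_lt (by omega) hcase hg h
    exact absurd (hmax g' hg') (hmg.trans_lt hlt).not_ge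
  constructor
  · intro h
    exact hcard f hf.1 (h m ⟨hm, fun g hg _ => hmax g hg⟩)
  · rintro ⟨i, hi⟩ g hg
    obtain ⟨j, hj⟩ := hcard m hm le_rfl
    refine (hmax g hg.1).trans (hf.2 m hm ?_)
    rw [colorType_eq_of_card_colorClass hf.1 (by rwa [ZMod.card]),
      colorType_eq_of_card_colorClass hm (by rwa [ZMod.card])]
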